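/- Assume α ∈ ℤ and let i be an integer with 0 ≤ i ≤ |α|−1. Then there exist rational functions u, v ∈ ℂ(X) such that for all n ∈ ℤ: u(n) = ((−(n+ε))_i·(n+ε+α+β+1)_i)/((−2)^i·i!·(α+1)_i) and v(n) = ((ε+β+1)_n·(ε+1)_n/((ε+α+1)_n·(ε+α+β+1)_n))·((−(n+ε+α+β))_i·(n+ε+1)_i)/((−2)^i·i!·(−α+1)_i), and moreover u(X) = u(−X−2ε−α−β−1) and v(X) = v(−X−2ε−α−β−1) as identities in ℂ(X). -/

import Mathlib

/-- Pochhammer symbol `(a)_n` for complex `a` and integer `n`. -/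
noncomputable def poch (a : ℂ) (n : ℤ) : ℂ :=
  if 0 ≤ n then ∏ j ∈ Finset.range n.toNat, (a + (j : ℂ))
  else (∏ j ∈ Finset.range (-n).toNat, (a + (n : ℂ) + (j : ℂ)))⁻¹

/-- Gauss hypergeometric series `F(a,b;c;x)`. -/
noncomputable def hypF (a b c x : ℂ) : ℂ :=
  ∑' j : ℕ, (poch a (j : ℤ) * poch b (j : ℤ)) / ((j.factorial : ℂ) * poch c (j : ℤ)) * x ^ j

/-- The Jacobi difference operator `L_{α,β;ε}`. -/
noncomputable def jacobiL (α β ε : ℂ) (f : ℤ → ℂ) (n : ℤ) : ℂ :=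
  (2 * ((n : ℂ) + ε + 1) * ((n : ℂ) + ε + α + β + 1) /
      ((2 * (n : ℂ) + 2 * ε + α + β + 1) * (2 * (n : ℂ) + 2 * ε + α + β + 2))) * f (n + 1)
  + ((β ^ 2 - α ^ 2) /
      ((2 * (n : ℂ) + 2 * ε + α + β) * (2 * (n : ℂ) + 2 * ε + α + β + 2))) * f n
  + (2 * ((n : ℂ) + ε + α) * ((n : ℂ) + ε + β) /
      ((2 * (n : ℂ) + 2 * ε + α + β) * (2 * (n : ℂ) + 2 * ε + α + β + 1))) * f (n - 1)

/-- The eigenvalue `λ_ε(n) = (n+ε)(n+ε+α+β+1)`. -/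
noncomputable def lamE (α β ε : ℂ) (n : ℤ) : ℂ := ((n : ℂ) + ε) * ((n : ℂ) + ε + α + β + 1)

/-- The function `p^{α,β}_ε(n,z)` (case `α ∉ ℤ_{<0}`). -/
noncomputable def pStd (α β ε : ℂ) (n : ℤ) (z : ℂ) : ℂ :=
  (poch (ε + α + 1) n / poch (ε + 1) n) *
    hypF (-((n : ℂ) + ε)) ((n : ℂ) + ε + α + β + 1) (α + 1) ((1 - z) / 2)

/-- None of `ε, ε+α, ε+β, ε+α+β, 2ε+α+β` is an integer. -/
def GoodParams (α β ε : ℂ) : Prop :=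
  ∀ m : ℤ, ε ≠ (m : ℂ) ∧ ε + α ≠ (m : ℂ) ∧ ε + β ≠ (m : ℂ) ∧
    ε + α + β ≠ (m : ℂ) ∧ 2 * ε + α + β ≠ (m : ℂ)

/-!
With `σ(x) = -x - s` and `s = 2ε + α + β + 1`, the functions on `ℤ` that are restrictions of
`σ`-invariant rational functions are closed under products and inverses.
Since `σ` exchanges `-(x + e)` and `x + e'` whenever `e + e' = s`, the products
`(-(n + e))_i (n + e')_i` are of this kind.
The prefactor of `v` is rational because `α` is an integer: comparing the two ways of splitting
`(c)_{n + α}` gives `(c)_n / (c + α)_n = (c)_α / (c + n)_α`. Here `σ` exchanges the two factors of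
`(c + n)_α (d + n)_α`, up to a sign `(-1)^α` for each, when `c + d + α - 1 = s`.
-/

open Polynomial Complex

section Pochhammer

lemma poch_natCast (c : ℂ) (m : ℕ) : poch c m = (ascPochhammer ℂ m).eval c := by
  induction m with
  | zero => simp [poch]
  | succ m ih =>
    have hm : (0 : ℤ) ≤ (m + 1 : ℕ) := by lia
    rw [ascPochhammer_succ_eval, ← ih]
    simp only [poch, hm, Int.natCast_nonneg, if_true, Int.toNat_natCast, Finset.prod_range_succ]

lemma poch_neg_natCast (c : ℂ) (m : ℕ) : poch c (-m) = (poch (c - m) m)⁻¹ := by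
  rcases m.eq_zero_or_pos with rfl | hm
  · simp [poch]
  · rw [poch, if_neg (by lia)]
    simp [poch, sub_eq_add_neg]

lemma poch_natCast_succ_left (c : ℂ) (m : ℕ) : poch c (m + 1 : ℕ) = c * poch (c + 1) m := by
  simp only [poch_natCast, ascPochhammer_succ_left, eval_mul, eval_X, eval_comp, eval_add, eval_one]

lemma poch_natCast_succ_right (c : ℂ) (m : ℕ) : poch c (m + 1 : ℕ) = poch c m * (c + m) := by
  simp only [poch_natCast, ascPochhammer_succ_eval]

lemma poch_neg_left (x : ℂ) (m : ℕ) : poch (-x) m = (-1) ^ m * poch (x - m + 1) m := by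
  rw [poch_natCast, poch_natCast, ascPochhammer_eval_neg_eq_descPochhammer,
    descPochhammer_eval_eq_ascPochhammer]

variable {c : ℂ}

lemma poch_add_one (hc : c ∈ integerComplement) (n : ℤ) : poch c (n + 1) = poch c n * (c + n) := by
  rcases le_or_gt 0 n with hn | hn
  · lift n to ℕ using hn
    exact_mod_cast poch_natCast_succ_right c n
  · obtain ⟨k, rfl⟩ : ∃ k : ℕ, n = -(k + 1 : ℕ) := ⟨(-n - 1).toNat, by lia⟩
    have hne : c + (-(k + 1 : ℕ) : ℤ) ≠ 0 := integerComplement_add_ne_zero hc _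
    have hsplit : poch (c - (k + 1 : ℕ)) (k + 1 : ℕ) =
        (c + (-(k + 1 : ℕ) : ℤ)) * poch (c - k) k := by
      rw [poch_natCast_succ_left]
      congr 2 <;> push_cast <;> ring
    rw [show (-(k + 1 : ℕ) : ℤ) + 1 = -(k : ℤ) by push_cast; ring, poch_neg_natCast,
      poch_neg_natCast, hsplit, mul_inv_rev, inv_mul_cancel_right₀ hne]

lemma poch_ne_zero (hc : c ∈ integerComplement) (n : ℤ) : poch c n ≠ 0 := by
  induction n using Int.induction_on with
  | zero => simp [poch]
  | succ k ih =>
    rw [poch_add_one hc]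
    exact mul_ne_zero ih (integerComplement_add_ne_zero hc _)
  | pred k ih =>
    rw [← sub_add_cancel (-(k : ℤ)) 1, poch_add_one hc] at ih
    exact left_ne_zero_of_mul ih

lemma poch_add (hc : c ∈ integerComplement) (m n : ℤ) :
    poch c (m + n) = poch c m * poch (c + m) n := by
  have hcm : c + m ∈ integerComplement := (add_intCast_mem_integerComplement m).2 hc
  have hstep (k : ℤ) : c + m + k ≠ 0 := integerComplement_add_ne_zero hcm k
  have hiff (k : ℤ) : poch c (m + k) = poch c m * poch (c + m) k ↔
      poch c (m + (k + 1)) = poch c m * poch (c + m) (k + 1) := by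
    rw [← add_assoc, poch_add_one hc, poch_add_one hcm, Int.cast_add, ← add_assoc, ← mul_assoc,
      mul_left_inj' (hstep k)]
  induction n using Int.induction_on with
  | zero => simp [poch]
  | succ k ih => exact (hiff k).1 ih
  | pred k ih => exact (hiff _).2 (by rwa [sub_add_cancel])

lemma poch_div_poch_add_intCast (hc : c ∈ integerComplement) (a n : ℤ) :
    poch c n / poch (c + a) n = poch c a / poch (c + n) a := by
  have hca : c + a ∈ integerComplement := (add_intCast_mem_integerComplement a).2 hc
  have hcn : c + n ∈ integerComplement := (add_intCast_mem_integerComplement n).2 hc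
  rw [div_eq_div_iff (poch_ne_zero hca n) (poch_ne_zero hcn a), ← poch_add hc, ← poch_add hc,
    add_comm]

end Pochhammer

/-- `f : ℤ → ℂ` is the restriction of a rational function `N / D` without poles on `ℤ` that is
invariant under the reflection `x ↦ -x - s`; the invariance is cross-multiplied so that it is an
identity of polynomials. -/
def IsReflectionInvariantRational (s : ℂ) (f : ℤ → ℂ) : Prop :=
  ∃ N D : ℂ[X], (∀ n : ℤ, D.eval (n : ℂ) ≠ 0) ∧
    (∀ n : ℤ, N.eval (n : ℂ) / D.eval (n : ℂ) = f n) ∧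
    N.comp (-X - C s) * D = N * D.comp (-X - C s)

namespace IsReflectionInvariantRational

variable {s : ℂ} {f g : ℤ → ℂ}

lemma of_polynomial (p : ℂ[X]) (hp : ∀ x, p.eval (-x - s) = p.eval x) :
    IsReflectionInvariantRational s fun n ↦ p.eval (n : ℂ) := by
  have hcomp : p.comp (-X - C s) = p := Polynomial.funext fun x ↦ by simp [hp]
  exact ⟨p, 1, by simp, by simp, by rw [hcomp, one_comp]⟩

lemma const (s c : ℂ) : IsReflectionInvariantRational s fun _ ↦ c := by
  simpa using of_polynomial (s := s) (C c) (by simp)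

lemma mul (hf : IsReflectionInvariantRational s f) (hg : IsReflectionInvariantRational s g) :
    IsReflectionInvariantRational s fun n ↦ f n * g n := by
  obtain ⟨N, D, hD, hND, hinv⟩ := hf
  obtain ⟨N', D', hD', hND', hinv'⟩ := hg
  refine ⟨N * N', D * D', fun n ↦ ?_, fun n ↦ ?_, ?_⟩
  · rw [eval_mul]
    exact mul_ne_zero (hD n) (hD' n)
  · rw [eval_mul, eval_mul, mul_div_mul_comm, hND, hND']
  · rw [mul_comp, mul_comp, mul_mul_mul_comm, hinv, hinv', mul_mul_mul_comm]

lemma inv (hf : IsReflectionInvariantRational s f) (hne : ∀ n, f n ≠ 0) :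
    IsReflectionInvariantRational s fun n ↦ (f n)⁻¹ := by
  obtain ⟨N, D, -, hND, hinv⟩ := hf
  refine ⟨D, N, fun n hN ↦ hne n ?_, fun n ↦ ?_, ?_⟩
  · rw [← hND, hN, zero_div]
  · simp only [← hND, inv_div]
  · rw [mul_comm, ← hinv, mul_comm]

lemma div (hf : IsReflectionInvariantRational s f) (hg : IsReflectionInvariantRational s g)
    (hne : ∀ n, g n ≠ 0) : IsReflectionInvariantRational s fun n ↦ f n / g n := by
  simpa only [div_eq_mul_inv] using hf.mul (hg.inv hne)

lemma poch_neg_mul_poch {e e' : ℂ} (hs : s = e + e') (i : ℕ) :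
    IsReflectionInvariantRational s fun n ↦ poch (-(n + e)) i * poch (n + e') i := by
  let p : ℂ[X] := (ascPochhammer ℂ i).comp (-(X + C e)) * (ascPochhammer ℂ i).comp (X + C e')
  have hp (x : ℂ) : p.eval x = poch (-(x + e)) i * poch (x + e') i := by simp [p, poch_natCast]
  simp only [← hp]
  refine of_polynomial p fun x ↦ ?_
  rw [hp, hp, mul_comm]
  subst hs
  congr 2 <;> ring

lemma poch_mul_poch_natCast {c d : ℂ} (m : ℕ) (hs : s = c + d + m - 1) :
    IsReflectionInvariantRational s fun n ↦ poch (c + n) m * poch (d + n) m := by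
  let p : ℂ[X] := (ascPochhammer ℂ m).comp (C c + X) * (ascPochhammer ℂ m).comp (C d + X)
  have hp (x : ℂ) : p.eval x = poch (c + x) m * poch (d + x) m := by simp [p, poch_natCast]
  have hswap {a b : ℂ} (hab : s = a + b + m - 1) (x : ℂ) :
      poch (a + (-x - s)) m = (-1) ^ m * poch (b + x) m := by
    rw [show a + (-x - s) = -(b + x + m - 1) by rw [hab]; ring, poch_neg_left]
    ring_nf
  simp only [← hp]
  refine of_polynomial p fun x ↦ ?_
  rw [hp, hp, hswap hs, hswap (by rw [hs]; ring), mul_mul_mul_comm, ← mul_pow, neg_one_mul, neg_neg,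
    one_pow, one_mul, mul_comm]

lemma poch_mul_poch {c d : ℂ} (hc : c ∈ integerComplement) (hd : d ∈ integerComplement) (a : ℤ)
    (hs : s = c + d + a - 1) :
    IsReflectionInvariantRational s fun n ↦ poch (c + n) a * poch (d + n) a := by
  obtain ⟨m, rfl | rfl⟩ := a.eq_nat_or_neg
  · exact poch_mul_poch_natCast m (by simpa using hs)
  · have hshift {b : ℂ} (hb : b ∈ integerComplement) (n : ℤ) : poch (b - m + n) m ≠ 0 := by
      refine poch_ne_zero ?_ m
      simpa [sub_eq_add_neg, add_assoc] using (add_intCast_mem_integerComplement (-m + n)).2 hb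
    have hpos := poch_mul_poch_natCast (c := c - m) (d := d - m) m (s := s)
      (by rw [hs]; push_cast; ring)
    simpa only [poch_neg_natCast, mul_inv, sub_add_eq_add_sub] using
      hpos.inv fun n ↦ mul_ne_zero (hshift hc n) (hshift hd n)

lemma poch_mul_poch_div_poch_mul_poch {c d c' d' : ℂ} (hc : c ∈ integerComplement)
    (hd : d ∈ integerComplement) (a : ℤ) (hc' : c' = c + a) (hd' : d' = d + a)
    (hs : s = c + d + a - 1) :
    IsReflectionInvariantRational s fun n ↦ poch c n * poch d n / (poch c' n * poch d' n) := by
  have hshift {b : ℂ} (hb : b ∈ integerComplement) (n : ℤ) : poch (b + n) a ≠ 0 :=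
    poch_ne_zero ((add_intCast_mem_integerComplement n).2 hb) a
  have hsplit (n : ℤ) : poch c n * poch d n / (poch c' n * poch d' n) =
      poch c a * poch d a / (poch (c + n) a * poch (d + n) a) := by
    rw [hc', hd', mul_div_mul_comm, poch_div_poch_add_intCast hc, poch_div_poch_add_intCast hd,
      mul_div_mul_comm]
  simp only [hsplit]
  exact (const s _).div (poch_mul_poch hc hd a hs)
    fun n ↦ mul_ne_zero (hshift hc n) (hshift hd n)

end IsReflectionInvariantRational

lemma GoodParams.add_one_mem_integerComplement {α β ε : ℂ} (h : GoodParams α β ε) :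
    ε + 1 ∈ integerComplement := by
  simpa using (add_intCast_mem_integerComplement 1).2 fun ⟨m, hm⟩ ↦ (h m).1 hm.symm

lemma GoodParams.add_beta_add_one_mem_integerComplement {α β ε : ℂ} (h : GoodParams α β ε) :
    ε + β + 1 ∈ integerComplement := by
  simpa using (add_intCast_mem_integerComplement 1).2 fun ⟨m, hm⟩ ↦ (h m).2.2.1 hm.symm

/-- For `α ∈ ℤ` and `0 ≤ i ≤ |α|−1`, the functions
`Φ₊^{(i)}` and `Ψ₊^{(i)}` are restrictions to `ℤ` of `I`-invariant rational
functions (`I`-invariance stated in cross-multiplied polynomial form). -/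
theorem stmt16 (α β ε : ℂ) (hgood : GoodParams α β ε)
    (a : ℤ) (hα : α = (a : ℂ)) (i : ℕ) (hi : (i : ℤ) ≤ |a| - 1) :
    ∃ uN uD vN vD : Polynomial ℂ,
      (∀ n : ℤ, uD.eval (n : ℂ) ≠ 0) ∧ (∀ n : ℤ, vD.eval (n : ℂ) ≠ 0) ∧
      (∀ n : ℤ, uN.eval (n : ℂ) / uD.eval (n : ℂ)
        = (poch (-((n : ℂ) + ε)) (i : ℤ) * poch ((n : ℂ) + ε + α + β + 1) (i : ℤ)) /
            ((-2 : ℂ) ^ i * (i.factorial : ℂ) * poch (α + 1) (i : ℤ))) ∧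
      (∀ n : ℤ, vN.eval (n : ℂ) / vD.eval (n : ℂ)
        = (poch (ε + β + 1) n * poch (ε + 1) n /
              (poch (ε + α + 1) n * poch (ε + α + β + 1) n)) *
            (poch (-((n : ℂ) + ε + α + β)) (i : ℤ) * poch ((n : ℂ) + ε + 1) (i : ℤ)) /
            ((-2 : ℂ) ^ i * (i.factorial : ℂ) * poch (-α + 1) (i : ℤ))) ∧
      uN.comp (-Polynomial.X - Polynomial.C (2 * ε + α + β + 1)) * uD
        = uN * (uD.comp (-Polynomial.X - Polynomial.C (2 * ε + α + β + 1))) ∧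
      vN.comp (-Polynomial.X - Polynomial.C (2 * ε + α + β + 1)) * vD
        = vN * (vD.comp (-Polynomial.X - Polynomial.C (2 * ε + α + β + 1))) := by
  have hΦ := IsReflectionInvariantRational.poch_neg_mul_poch
    (s := 2 * ε + α + β + 1) (e := ε) (e' := ε + α + β + 1) (by ring) i
  have hΨ := IsReflectionInvariantRational.poch_neg_mul_poch
    (s := 2 * ε + α + β + 1) (e := ε + α + β) (e' := ε + 1) (by ring) i
  have hratio := IsReflectionInvariantRational.poch_mul_poch_div_poch_mul_poch
    (s := 2 * ε + α + β + 1) (c' := ε + α + 1) (d' := ε + α + β + 1)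
    hgood.add_one_mem_integerComplement hgood.add_beta_add_one_mem_integerComplement a
    (by rw [hα]; ring) (by rw [hα]; ring) (by rw [hα]; ring)
  obtain ⟨uN, uD, huD, hu, huinv⟩ := hΦ.mul
    (.const _ ((-2 : ℂ) ^ i * (i.factorial : ℂ) * poch (α + 1) i)⁻¹)
  obtain ⟨vN, vD, hvD, hv, hvinv⟩ := (hratio.mul hΨ).mul
    (.const _ ((-2 : ℂ) ^ i * (i.factorial : ℂ) * poch (-α + 1) i)⁻¹)
  refine ⟨uN, uD, vN, vD, huD, hvD, fun n ↦ ?_, fun n ↦ ?_, huinv, hvinv⟩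
  · simp only [hu, div_eq_mul_inv, add_assoc]
  · simp only [hv, div_eq_mul_inv, add_assoc, mul_comm (poch (ε + 1) n)]
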